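/- arXiv:2012.11177 — 2 statements merged into one kernel-verified Lean document; each statement's English description precedes it below -/
import Mathlib

section
/- Let P_n be the path on n vertices and let 1/2 ≤ α ≤ 1. Then for every k with 1 ≤ k ≤ n, S_k(A_α(P_n)) ≤ 2αk + (1−α)·( csc(π/(2n))·sin((2k+1)π/(2n)) − 1 ). -/
open Matrix Finset Real

/-- The `A_α`-matrix of a graph: `A_α(G) = α·D(G) + (1−α)·A(G)`. -/
noncomputable def Aalpha {n : ℕ} (α : ℝ) (G : SimpleGraph (Fin n)) [DecidableRel G.Adj] :
    Matrix (Fin n) (Fin n) ℝ :=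
  α • Matrix.diagonal (fun i => (G.degree i : ℝ)) + (1 - α) • G.adjMatrix ℝ

/-- The sum of the `k` largest eigenvalues of a real symmetric matrix, expressed as
the supremum over all `k`-subsets of indices of the corresponding eigenvalue sums. -/
noncomputable def Sk {n : ℕ} (M : Matrix (Fin n) (Fin n) ℝ) (k : ℕ) : ℝ :=
  if h : M.IsHermitian then
    sSup {x : ℝ | ∃ s : Finset (Fin n), s.card = k ∧ x = ∑ i ∈ s, h.eigenvalues i}
  else 0

/-!
Write `A_α = (2α - 1) D + (1 - α) Q` with `Q = D + A` the signless Laplacian. Both coefficients are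
nonnegative, so the subadditivity of `S_k` (Ky Fan) gives
`S_k(A_α) ≤ (2α - 1) S_k(D) + (1 - α) S_k(Q)`. All degrees of a path are at most `2`, hence
`S_k(D) ≤ 2k`. The vectors `i ↦ sin ((i + 1/2) θ)` with `θ = jπ/n`, `1 ≤ j ≤ n`, are eigenvectors
of `Q(P_n)` for the distinct eigenvalues `2 + 2 cos θ`, so `S_k(Q)` is a cosine sum, which
telescopes after multiplication by `sin (π / (2n))`.
-/

section TopSet

variable {ι R : Type*}

/-- `t` collects the largest values of `f`: every value of `f` on `t` is at least every value
off `t`. Sums over such sets are sums of `#t` largest values, without sorting the index set. -/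
def IsTopSet [LE R] (f : ι → R) (t : Finset ι) : Prop :=
  ∀ i ∈ t, ∀ j ∉ t, f j ≤ f i

theorem IsTopSet.exists_threshold [LinearOrder R] [Nonempty R] [Finite ι] {f : ι → R}
    {t : Finset ι} (ht : IsTopSet f t) :
    ∃ c, (∀ i ∈ t, c ≤ f i) ∧ ∀ j ∉ t, f j ≤ c := by
  rcases t.eq_empty_or_nonempty with rfl | hne
  · obtain ⟨c, hc⟩ := Set.finite_range f |>.bddAbove
    exact ⟨c, by simp, fun j _ => hc ⟨j, rfl⟩⟩
  · obtain ⟨i, hi, hmin⟩ := t.exists_min_image f hne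
    exact ⟨f i, hmin, ht i hi⟩

theorem IsTopSet.sum_mul_le_sum [CommRing R] [LinearOrder R] [IsStrictOrderedRing R] [Fintype ι]
    {f w : ι → R} {t : Finset ι} (ht : IsTopSet f t)
    (hw₀ : ∀ i, 0 ≤ w i) (hw₁ : ∀ i, w i ≤ 1) (hw : ∑ i, w i = #t) :
    ∑ i, f i * w i ≤ ∑ i ∈ t, f i := by
  classical
  obtain ⟨c, hc_le, hle_c⟩ := ht.exists_threshold
  have shifted : ∑ i, (f i - c) * w i ≤ ∑ i ∈ t, (f i - c) := by
    rw [← sum_ite_mem_eq t (fun i => f i - c)]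
    refine sum_le_sum fun i _ => ?_
    split_ifs with hi
    · exact mul_le_of_le_one_right (sub_nonneg.2 (hc_le i hi)) (hw₁ i)
    · exact mul_nonpos_of_nonpos_of_nonneg (sub_nonpos.2 (hle_c i hi)) (hw₀ i)
  simp only [sub_mul, sum_sub_distrib, ← mul_sum, hw, sum_const, nsmul_eq_mul] at shifted
  linarith

theorem IsTopSet.sum_le_sum [CommRing R] [LinearOrder R] [IsStrictOrderedRing R] [Finite ι]
    {f : ι → R} {s t : Finset ι} (ht : IsTopSet f t) (hst : #s = #t) :
    ∑ i ∈ s, f i ≤ ∑ i ∈ t, f i := by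
  classical
  cases nonempty_fintype ι
  have h := ht.sum_mul_le_sum (w := fun i => if i ∈ s then 1 else 0)
    (fun i => by positivity) (fun i => by split_ifs <;> simp) (by simp [hst])
  simpa using h

theorem exists_isTopSet_card_eq [LinearOrder R] [Fintype ι] (f : ι → R) {k : ℕ}
    (hk : k ≤ Fintype.card ι) :
    ∃ t, IsTopSet f t ∧ #t = k := by
  classical
  induction k with
  | zero => exact ⟨∅, by simp [IsTopSet]⟩
  | succ k ih =>
    obtain ⟨t, ht, rfl⟩ := ih (by lia)
    have hne : tᶜ.Nonempty := by rw [← card_pos, card_compl]; lia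
    obtain ⟨i₀, hi₀, hmax⟩ := tᶜ.exists_max_image f hne
    refine ⟨insert i₀ t, fun i hi j hj => ?_, card_insert_of_notMem (mem_compl.1 hi₀)⟩
    have hj_notMem : j ∉ t := fun h => hj (mem_insert_of_mem h)
    rcases mem_insert.1 hi with rfl | hi
    · exact hmax j (mem_compl.2 hj_notMem)
    · exact ht i hi j hj_notMem

end TopSet

section KyFan

theorem inner_toEuclideanLin_eq_sum_eigenvalues {ι : Type*} [Fintype ι] [DecidableEq ι]
    {M : Matrix ι ι ℝ} (hM : M.IsHermitian) (x : EuclideanSpace ℝ ι) :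
    inner ℝ x (toEuclideanLin M x) =
      ∑ i, hM.eigenvalues i * inner ℝ (hM.eigenvectorBasis i) x ^ 2 := by
  rw [← hM.eigenvectorBasis.sum_inner_mul_inner]
  refine sum_congr rfl fun i _ => ?_
  have heig : toEuclideanLin M (hM.eigenvectorBasis i) =
      hM.eigenvalues i • hM.eigenvectorBasis i := by
    rw [toLpLin_apply, hM.mulVec_eigenvectorBasis]
    rfl
  rw [← isSymmetric_toEuclideanLin_iff.2 hM, heig, real_inner_smul_left, real_inner_comm]
  ring

theorem inner_toEuclideanLin_eigenvectorBasis {ι : Type*} [Fintype ι] [DecidableEq ι]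
    {M : Matrix ι ι ℝ} (hM : M.IsHermitian) (i : ι) :
    inner ℝ (hM.eigenvectorBasis i) (toEuclideanLin M (hM.eigenvectorBasis i)) =
      hM.eigenvalues i := by
  simp [inner_toEuclideanLin_eq_sum_eigenvalues hM, OrthonormalBasis.inner_eq_ite]

variable {n k : ℕ} {M N : Matrix (Fin n) (Fin n) ℝ}

theorem Sk_eq_sum_of_isTopSet (hM : M.IsHermitian) {t : Finset (Fin n)}
    (ht : IsTopSet hM.eigenvalues t) : Sk M #t = ∑ i ∈ t, hM.eigenvalues i := by
  rw [Sk, dif_pos hM]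
  refine IsGreatest.csSup_eq ⟨⟨t, rfl, rfl⟩, ?_⟩
  rintro _ ⟨s, hst, rfl⟩
  exact ht.sum_le_sum hst

theorem exists_Sk_eq_sum (hM : M.IsHermitian) (hk : k ≤ n) :
    ∃ t : Finset (Fin n), #t = k ∧ Sk M k = ∑ i ∈ t, hM.eigenvalues i := by
  obtain ⟨t, ht, rfl⟩ := exists_isTopSet_card_eq hM.eigenvalues (k := k) (by simpa using hk)
  exact ⟨t, rfl, Sk_eq_sum_of_isTopSet hM ht⟩

/-- **Ky Fan's maximum principle**: in an eigenbasis of `M`, the squared coordinates of the `v i`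
add up to weights of total `#s`, each at most `1` by Bessel's inequality. -/
theorem sum_inner_toEuclideanLin_le_Sk (hM : M.IsHermitian) {ι : Type*}
    {v : ι → EuclideanSpace ℝ (Fin n)} (hv : Orthonormal ℝ v) (s : Finset ι) :
    ∑ i ∈ s, inner ℝ (v i) (toEuclideanLin M (v i)) ≤ Sk M #s := by
  have hcard : #s ≤ Fintype.card (Fin n) := by
    simpa using (hv.comp _ Subtype.val_injective : Orthonormal ℝ fun i : s => v i)
      |>.linearIndependent.fintype_card_le_finrank
  obtain ⟨t, ht, hts⟩ := exists_isTopSet_card_eq hM.eigenvalues hcard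
  let b := hM.eigenvectorBasis
  let w (j : Fin n) : ℝ := ∑ i ∈ s, inner ℝ (b j) (v i) ^ 2
  have hw_le_one (j : Fin n) : w j ≤ 1 := by
    have bessel := hv.sum_inner_products_le (b j) (s := s)
    simpa [w, real_inner_comm] using bessel
  have hw_sum : ∑ j, w j = #t := by
    simp only [w, sum_comm (t := s), b.sum_sq_inner_right, hv.norm_eq_one, hts]
    simp
  calc ∑ i ∈ s, inner ℝ (v i) (toEuclideanLin M (v i))
      = ∑ j, hM.eigenvalues j * w j := by
        simp only [inner_toEuclideanLin_eq_sum_eigenvalues hM, w, mul_sum, b]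
        rw [sum_comm]
    _ ≤ ∑ j ∈ t, hM.eigenvalues j :=
        ht.sum_mul_le_sum (fun j => by positivity) hw_le_one hw_sum
    _ = Sk M #s := by rw [← hts, Sk_eq_sum_of_isTopSet hM ht]

theorem Sk_add_le (hM : M.IsHermitian) (hN : N.IsHermitian) (hk : k ≤ n) :
    Sk (M + N) k ≤ Sk M k + Sk N k := by
  have hMN := hM.add hN
  obtain ⟨t, rfl, ht⟩ := exists_Sk_eq_sum hMN hk
  have hv := hMN.eigenvectorBasis.orthonormal
  rw [ht]
  simp only [← inner_toEuclideanLin_eigenvectorBasis hMN, map_add, LinearMap.add_apply,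
    inner_add_right, sum_add_distrib]
  exact add_le_add (sum_inner_toEuclideanLin_le_Sk hM hv t) (sum_inner_toEuclideanLin_le_Sk hN hv t)

theorem Sk_smul_le (hM : M.IsHermitian) (hk : k ≤ n) {c : ℝ} (hc : 0 ≤ c) :
    Sk (c • M) k ≤ c * Sk M k := by
  have hcM : (c • M).IsHermitian := hM.smul (IsSelfAdjoint.all c)
  obtain ⟨t, rfl, ht⟩ := exists_Sk_eq_sum hcM hk
  rw [ht]
  simp only [← inner_toEuclideanLin_eigenvectorBasis hcM, map_smul, LinearMap.smul_apply,
    inner_smul_right, ← mul_sum]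
  gcongr
  exact sum_inner_toEuclideanLin_le_Sk hM hcM.eigenvectorBasis.orthonormal t

theorem Sk_diagonal_le {d : Fin n → ℝ} {c : ℝ} (hd : ∀ i, d i ≤ c) (hk : k ≤ n) :
    Sk (diagonal d) k ≤ k * c := by
  have hD : (diagonal d).IsHermitian := isHermitian_diagonal d
  obtain ⟨t, rfl, ht⟩ := exists_Sk_eq_sum hD hk
  have heig_le (i : Fin n) : hD.eigenvalues i ≤ c := by
    obtain ⟨j, hj⟩ := spectrum_diagonal d ▸ hD.eigenvalues_mem_spectrum_real i
    exact hj ▸ hd j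
  simpa [ht] using sum_le_card_nsmul t _ c fun i _ => heig_le i

theorem Sk_eq_sum_of_strictAnti (hM : M.IsHermitian) {μ : Fin n → ℝ} (hμ : StrictAnti μ)
    (hμM : ∀ j, μ j ∈ spectrum ℝ M) (hk : k ≤ n) :
    Sk M k = ∑ j : Fin k, μ (Fin.castLE hk j) := by
  -- `n` distinct spectral values of an `n × n` matrix are all its eigenvalues.
  obtain ⟨σ, hσ⟩ : ∃ σ : Fin n → Fin n, ∀ j, hM.eigenvalues (σ j) = μ j := by
    simpa [hM.spectrum_real_eq_range_eigenvalues, Classical.skolem] using hμM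
  have hσ_inj : Function.Injective σ := fun i j hij =>
    hμ.injective (by rw [← hσ, ← hσ, hij])
  let e : Fin k ↪ Fin n := (Fin.castLEEmb hk).trans ⟨σ, hσ_inj⟩
  have htop : IsTopSet hM.eigenvalues (univ.map e) := by
    intro i hi j hj
    obtain ⟨a, -, rfl⟩ := mem_map.1 hi
    obtain ⟨b, rfl⟩ := (Finite.injective_iff_surjective.1 hσ_inj) j
    have hkb : k ≤ b := by
      by_contra! hbk
      exact hj (mem_map.2 ⟨⟨b, hbk⟩, mem_univ _, rfl⟩)
    have hab : Fin.castLE hk a ≤ b := Fin.le_def.2 (a.2.le.trans hkb)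
    simpa [e, hσ] using hμ.antitone hab
  simpa [e, hσ] using Sk_eq_sum_of_isTopSet hM htop

end KyFan

section SignlessLaplacian

/-- The signless Laplacian `Q(G) = D(G) + A(G)`, with which
`A_α(G) = (2α - 1) D(G) + (1 - α) Q(G)`. -/
def signlessLapMatrix {V : Type*} [Fintype V] [DecidableEq V] (G : SimpleGraph V)
    [DecidableRel G.Adj] (R : Type*) [AddMonoidWithOne R] : Matrix V V R :=
  G.degMatrix R + G.adjMatrix R

theorem isHermitian_signlessLapMatrix {V R : Type*} [Fintype V] [DecidableEq V]
    (G : SimpleGraph V) [DecidableRel G.Adj] [NonAssocSemiring R] [StarRing R] :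
    (signlessLapMatrix G R).IsHermitian :=
  (G.isHermitian_degMatrix R).add (G.isHermitian_adjMatrix R)

theorem signlessLapMatrix_mulVec_apply {V R : Type*} [Fintype V] [DecidableEq V]
    (G : SimpleGraph V) [DecidableRel G.Adj] [NonAssocSemiring R] (x : V → R) (v : V) :
    (signlessLapMatrix G R *ᵥ x) v = ∑ w ∈ G.neighborFinset v, (x v + x w) := by
  simp [signlessLapMatrix, add_mulVec, SimpleGraph.degMatrix_mulVec_apply,
    SimpleGraph.adjMatrix_mulVec_apply, sum_add_distrib]

variable {n : ℕ}

theorem Aalpha_eq_smul_degMatrix_add_smul_signlessLapMatrix (α : ℝ) (G : SimpleGraph (Fin n))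
    [DecidableRel G.Adj] :
    Aalpha α G = (2 * α - 1) • G.degMatrix ℝ + (1 - α) • signlessLapMatrix G ℝ := by
  rw [Aalpha, signlessLapMatrix, SimpleGraph.degMatrix]
  module

theorem Sk_Aalpha_le (G : SimpleGraph (Fin n)) [DecidableRel G.Adj] {α : ℝ} (hα₀ : 1 / 2 ≤ α)
    (hα₁ : α ≤ 1) {Δ k : ℕ} (hΔ : ∀ v, G.degree v ≤ Δ) (hk : k ≤ n) :
    Sk (Aalpha α G) k ≤
      (2 * α - 1) * (k * Δ) + (1 - α) * Sk (signlessLapMatrix G ℝ) k := by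
  have hD := G.isHermitian_degMatrix ℝ
  have hQ : (signlessLapMatrix G ℝ).IsHermitian := isHermitian_signlessLapMatrix G
  have h₀ : 0 ≤ 2 * α - 1 := by linarith
  have h₁ : 0 ≤ 1 - α := by linarith
  have hD_le : Sk (G.degMatrix ℝ) k ≤ k * Δ :=
    Sk_diagonal_le (fun v => Nat.cast_le.2 (hΔ v)) hk
  calc Sk (Aalpha α G) k
      ≤ Sk ((2 * α - 1) • G.degMatrix ℝ) k + Sk ((1 - α) • signlessLapMatrix G ℝ) k := by
        rw [Aalpha_eq_smul_degMatrix_add_smul_signlessLapMatrix]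
        exact Sk_add_le (hD.smul (IsSelfAdjoint.all _)) (hQ.smul (IsSelfAdjoint.all _)) hk
    _ ≤ (2 * α - 1) * Sk (G.degMatrix ℝ) k + (1 - α) * Sk (signlessLapMatrix G ℝ) k :=
        add_le_add (Sk_smul_le hD hk h₀) (Sk_smul_le hQ hk h₁)
    _ ≤ (2 * α - 1) * (k * Δ) + (1 - α) * Sk (signlessLapMatrix G ℝ) k := by gcongr

end SignlessLaplacian

section Trigonometry

theorem sum_range_two_mul_cos {θ : ℝ} (hθ : sin (θ / 2) ≠ 0) (k : ℕ) :
    ∑ j ∈ range k, 2 * cos ((j + 1) * θ) = (sin (θ / 2))⁻¹ * sin ((2 * k + 1) * (θ / 2)) - 1 := by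
  have telescope (j : ℕ) : sin (θ / 2) * (2 * cos ((j + 1) * θ)) =
      sin ((2 * (j + 1 : ℕ) + 1) * (θ / 2)) - sin ((2 * j + 1) * (θ / 2)) := by
    rw [sin_sub_sin]
    push_cast
    ring_nf
  have hsum : sin (θ / 2) * ∑ j ∈ range k, 2 * cos ((j + 1) * θ) =
      sin ((2 * k + 1) * (θ / 2)) - sin (θ / 2) := by
    rw [mul_sum, sum_congr rfl fun j _ => telescope j,
      sum_range_sub fun j : ℕ => sin ((2 * j + 1) * (θ / 2))]
    simp
  rw [eq_div_of_mul_eq hθ ((mul_comm _ _).trans hsum), sub_div, div_self hθ, inv_mul_eq_div]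

variable {j n : ℕ}

theorem add_one_mul_pi_div_le_pi (hj : j < n) : (j + 1) * (π / n) ≤ π := by
  have hn : (0 : ℝ) < n := Nat.cast_pos.2 hj.pos
  have hj' : (j + 1 : ℝ) ≤ n := by exact_mod_cast hj
  rw [mul_div_left_comm]
  exact mul_le_of_le_one_right pi_pos.le ((div_le_one hn).2 hj')

theorem sin_half_add_one_mul_pi_div_pos (hj : j < n) : 0 < sin ((j + 1) * (π / n) / 2) := by
  have hn : (0 : ℝ) < n := Nat.cast_pos.2 hj.pos
  exact sin_pos_of_pos_of_lt_pi (by positivity)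
    (by linarith [add_one_mul_pi_div_le_pi hj, pi_pos])

theorem strictAnti_cos_add_one_mul_pi_div :
    StrictAnti fun j : Fin n => cos ((j + 1) * (π / n)) := by
  intro i j hij
  have hn : (0 : ℝ) < n := Nat.cast_pos.2 i.pos
  have hij' : (i : ℕ) < j := hij
  exact cos_lt_cos_of_nonneg_of_le_pi (by positivity) (add_one_mul_pi_div_le_pi j.2) (by gcongr)

end Trigonometry

section PathGraph

variable {n : ℕ} [DecidableRel (SimpleGraph.pathGraph n).Adj]

theorem sum_neighborFinset_pathGraph {β : Type*} [AddCommMonoid β] (g : ℤ → β) (i : Fin n) :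
    ∑ j ∈ (SimpleGraph.pathGraph n).neighborFinset i, g (j : ℕ) =
      (if 0 < (i : ℕ) then g (i - 1 : ℤ) else 0) +
        if (i : ℕ) + 1 < n then g (i + 1 : ℤ) else 0 := by
  have hN : (SimpleGraph.pathGraph n).neighborFinset i =
      univ.filter (fun j : Fin n => j.val + 1 = i.val) ∪
        univ.filter (fun j : Fin n => j.val = i.val + 1) := by
    ext j
    simp [SimpleGraph.pathGraph_adj, or_comm, eq_comm]
  have hdisj : Disjoint (univ.filter fun j : Fin n => j.val + 1 = i.val)
      (univ.filter fun j : Fin n => j.val = i.val + 1) :=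
    disjoint_filter.2 fun j _ h h' => by lia
  rw [hN, sum_union hdisj]
  congr 1
  · split_ifs with h
    · have : univ.filter (fun j : Fin n => j.val + 1 = i.val) = {⟨i - 1, by lia⟩} := by
        ext j
        simp only [mem_filter, mem_univ, true_and, mem_singleton, Fin.ext_iff]
        lia
      simp [this, Nat.cast_sub (Nat.succ_le_of_lt h)]
    · exact sum_eq_zero fun j hj => absurd (mem_filter.1 hj).2 (by lia)
  · split_ifs with h
    · have : univ.filter (fun j : Fin n => j.val = i.val + 1) = {⟨i + 1, h⟩} := by
        ext j
        simp [Fin.ext_iff]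
      simp [this]
    · exact sum_eq_zero fun j hj => absurd (mem_filter.1 hj).2 (by lia)

theorem degree_pathGraph_le_two (i : Fin n) : (SimpleGraph.pathGraph n).degree i ≤ 2 := by
  rw [← SimpleGraph.card_neighborFinset_eq_degree, card_eq_sum_ones,
    sum_neighborFinset_pathGraph (fun _ => 1)]
  split_ifs <;> norm_num

/-- The boundary conditions on the ghost vertices `-1` and `n` make the terms of the two missing
edges vanish. -/
theorem signlessLapMatrix_pathGraph_mulVec_apply {R : Type*} [NonAssocRing R] {u : ℤ → R}
    (hleft : u (-1) = -u 0) (hright : u n = -u (n - 1)) (i : Fin n) :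
    (signlessLapMatrix (SimpleGraph.pathGraph n) R *ᵥ fun j => u (j : ℕ)) i =
      u (i - 1) + 2 * u i + u (i + 1) := by
  rw [signlessLapMatrix_mulVec_apply, sum_neighborFinset_pathGraph (fun m => u (i : ℕ) + u m)]
  have hpred : (if 0 < (i : ℕ) then u (i : ℕ) + u (i - 1) else 0) = u i + u (i - 1) := by
    split_ifs with h
    · rfl
    · have hi : (i : ℕ) = 0 := by lia
      simp [hi, hleft]
  have hsucc : (if (i : ℕ) + 1 < n then u (i : ℕ) + u (i + 1) else 0) = u i + u (i + 1) := by
    split_ifs with h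
    · rfl
    · have hi : ((i : ℕ) : ℤ) = n - 1 := by lia
      simp [hi, hright]
  rw [hpred, hsucc, two_mul]
  abel

theorem signlessLapMatrix_pathGraph_mulVec_sin {θ : ℝ} (hθ : sin (n * θ) = 0) :
    (signlessLapMatrix (SimpleGraph.pathGraph n) ℝ *ᵥ fun i => sin ((i + 1 / 2) * θ)) =
      (2 + 2 * cos θ) • fun i : Fin n => sin ((i + 1 / 2) * θ) := by
  let u (m : ℤ) : ℝ := sin ((m + 1 / 2) * θ)
  have hleft : u (-1) = -u 0 := by
    simp only [u, ← sin_neg]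
    congr 1
    push_cast
    ring
  have hright : u n = -u (n - 1) := by
    have hn : ((n : ℤ) + 1 / 2 : ℝ) * θ = n * θ + θ / 2 := by push_cast; ring
    have hn' : (((n - 1 : ℤ) : ℝ) + 1 / 2) * θ = n * θ - θ / 2 := by push_cast; ring
    simp only [u]
    rw [hn, hn', sin_add, sin_sub, hθ]
    ring
  have hrec (m : ℤ) : u (m - 1) + 2 * u m + u (m + 1) = (2 + 2 * cos θ) * u m := by
    have hpred : ((m - 1 : ℤ) + 1 / 2 : ℝ) * θ = (m + 1 / 2) * θ - θ := by push_cast; ring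
    have hsucc : ((m + 1 : ℤ) + 1 / 2 : ℝ) * θ = (m + 1 / 2) * θ + θ := by push_cast; ring
    simp only [u]
    rw [hpred, hsucc, sin_sub, sin_add]
    ring
  ext i
  simpa [u] using (signlessLapMatrix_pathGraph_mulVec_apply hleft hright i).trans (hrec i)

theorem two_add_two_mul_cos_mem_spectrum_signlessLapMatrix_pathGraph [NeZero n] {θ : ℝ}
    (hθ : sin (n * θ) = 0) (hθ₂ : sin (θ / 2) ≠ 0) :
    2 + 2 * cos θ ∈ spectrum ℝ (signlessLapMatrix (SimpleGraph.pathGraph n) ℝ) := by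
  rw [← spectrum_toLin', ← Module.End.hasEigenvalue_iff_mem_spectrum]
  have hne : (fun i : Fin n => sin ((i + 1 / 2) * θ)) ≠ 0 := fun h =>
    hθ₂ (by simpa [inv_mul_eq_div] using congrFun h 0)
  exact Module.End.hasEigenvalue_of_hasEigenvector
    (Module.End.hasEigenvector_iff.2
      ⟨Module.End.mem_eigenspace_iff.2 (signlessLapMatrix_pathGraph_mulVec_sin hθ), hne⟩)

theorem Sk_signlessLapMatrix_pathGraph_eq_sum_cos [NeZero n] {k : ℕ} (hk : k ≤ n) :
    Sk (signlessLapMatrix (SimpleGraph.pathGraph n) ℝ) k =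
      ∑ j ∈ range k, (2 + 2 * cos ((j + 1) * (π / n))) := by
  have hanti : StrictAnti fun j : Fin n => 2 + 2 * cos ((j + 1) * (π / n)) := fun i j hij => by
    have := strictAnti_cos_add_one_mul_pi_div hij
    linarith
  have hspec (j : Fin n) : 2 + 2 * cos ((j + 1) * (π / n)) ∈
      spectrum ℝ (signlessLapMatrix (SimpleGraph.pathGraph n) ℝ) := by
    refine two_add_two_mul_cos_mem_spectrum_signlessLapMatrix_pathGraph ?_
      (sin_half_add_one_mul_pi_div_pos j.2).ne'
    have hnθ : n * ((j + 1) * (π / n)) = (j + 1 : ℕ) * π := by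
      have hn : (n : ℝ) ≠ 0 := NeZero.ne _
      push_cast
      field_simp
    rw [hnθ, sin_nat_mul_pi]
  rw [Sk_eq_sum_of_strictAnti (isHermitian_signlessLapMatrix _) hanti hspec hk]
  exact Fin.sum_univ_eq_sum_range (fun j => 2 + 2 * cos ((j + 1) * (π / n))) k

theorem Sk_signlessLapMatrix_pathGraph [NeZero n] {k : ℕ} (hk : k ≤ n) :
    Sk (signlessLapMatrix (SimpleGraph.pathGraph n) ℝ) k =
      2 * k + ((sin (π / (2 * n)))⁻¹ * sin ((2 * k + 1) * π / (2 * n)) - 1) := by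
  have hsin : sin (π / n / 2) ≠ 0 := by
    simpa using (sin_half_add_one_mul_pi_div_pos (NeZero.pos n)).ne'
  have hhalf : π / n / 2 = π / (2 * n) := by ring
  rw [Sk_signlessLapMatrix_pathGraph_eq_sum_cos hk, sum_add_distrib, sum_range_two_mul_cos hsin,
    hhalf, mul_div_assoc]
  simp [mul_comm]

end PathGraph

theorem stmt11 (n : ℕ) [DecidableRel (SimpleGraph.pathGraph n).Adj]
    (α : ℝ) (hα0 : 1 / 2 ≤ α) (hα1 : α ≤ 1)
    (k : ℕ) (hk1 : 1 ≤ k) (hkn : k ≤ n) :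
    Sk (Aalpha α (SimpleGraph.pathGraph n)) k ≤
      2 * α * k + (1 - α) *
        ((Real.sin (π / (2 * n)))⁻¹ * Real.sin ((2 * k + 1) * π / (2 * n)) - 1) := by
  have : NeZero n := ⟨by lia⟩
  have hSk := Sk_Aalpha_le (SimpleGraph.pathGraph n) hα0 hα1 degree_pathGraph_le_two hkn
  rw [Sk_signlessLapMatrix_pathGraph hkn] at hSk
  push_cast at hSk
  linarith
end

section
/- Let G be a connected bipartite graph with bipartition V(G) = X ∪ Y, where |X| = s and |Y| = t, let m be the number of edges of G and β its matching number, and let 0 ≤ α ≤ 1. Then for every k with 1 ≤ k ≤ β + 1, S_k(A_α(G)) ≥ (αm/2)·(1/s + 1/t) + (1−α)m/√(st) + (k−1)·( α − 2(1−α)√(st)/(s+t) ). -/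
open Matrix Finset Real

/-- The matching number of a graph: the largest number of pairwise disjoint edges. -/
noncomputable def matchingNumber {n : ℕ} (G : SimpleGraph (Fin n)) : ℕ :=
  sSup {k | ∃ M : G.Subgraph, M.IsMatching ∧ M.edgeSet.ncard = k}

/-! The Ky Fan inequality bounds `S_k` below by the sum of the Rayleigh quotients of any `k`
orthonormal vectors. One test vector takes the value `1 / √(2s)` on `X` and `1 / √(2t)` on `Y`; as
every edge joins `X` to `Y`, all edges contribute the same amount to its quotient. The remaining
`k - 1` test vectors `(√s e_x - √t e_y) / √(s + t)` come from the edges `xy` of a matching, which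
makes them pairwise orthogonal, and the ratio `√s : √t` makes them orthogonal to the first. -/

section KyFan

theorem exists_card_eq_and_threshold {ι R : Type*} [Finite ι] [LinearOrder R] [Nonempty R]
    (f : ι → R) {k : ℕ} (hk : k ≤ Nat.card ι) :
    ∃ (T : Finset ι) (τ : R), #T = k ∧ (∀ i ∈ T, τ ≤ f i) ∧ ∀ i ∉ T, f i ≤ τ := by
  classical
  have := Fintype.ofFinite ι
  induction k with
  | zero =>
    obtain ⟨τ, hτ⟩ := (Set.finite_range f).bddAbove
    exact ⟨∅, τ, card_empty, by simp, fun i _ => hτ ⟨i, rfl⟩⟩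
  | succ k ih =>
    obtain ⟨T, τ, hT, hle, hge⟩ := ih (by lia)
    have hne : Tᶜ.Nonempty := by
      rw [← card_pos, card_compl, ← Nat.card_eq_fintype_card]
      lia
    obtain ⟨a, ha, hmax⟩ := exists_max_image Tᶜ f hne
    rw [mem_compl] at ha
    refine ⟨insert a T, f a, by rw [card_insert_of_notMem ha, hT], fun i hi => ?_, fun i hi => ?_⟩
    · rcases mem_insert.1 hi with rfl | hi
      · exact le_rfl
      · exact (hge a ha).trans (hle i hi)
    · exact hmax i (mem_compl.2 fun h => hi (mem_insert_of_mem h))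

theorem sum_mul_le_sum_of_threshold {ι R : Type*} [Fintype ι] [CommRing R] [LinearOrder R]
    [IsStrictOrderedRing R] {f c : ι → R} {T : Finset ι} {τ : R} (hT : ∀ i ∈ T, τ ≤ f i)
    (hT' : ∀ i ∉ T, f i ≤ τ) (hc₀ : ∀ i, 0 ≤ c i) (hc₁ : ∀ i, c i ≤ 1) (hc : ∑ i, c i = #T) :
    ∑ i, f i * c i ≤ ∑ i ∈ T, f i := by
  classical
  have hterm (i : ι) : (f i - τ) * c i ≤ if i ∈ T then f i - τ else 0 := by
    split_ifs with hi
    · exact mul_le_of_le_one_right (sub_nonneg.2 (hT i hi)) (hc₁ i)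
    · exact mul_nonpos_of_nonpos_of_nonneg (sub_nonpos.2 (hT' i hi)) (hc₀ i)
  calc ∑ i, f i * c i = ∑ i, (f i - τ) * c i + τ * #T := by
        rw [← hc, mul_sum, ← sum_add_distrib]
        exact sum_congr rfl fun i _ => by ring
    _ ≤ ∑ i, (if i ∈ T then f i - τ else 0) + τ * #T := by gcongr with i; exact hterm i
    _ = ∑ i ∈ T, f i := by simp [sum_sub_distrib, mul_comm]

variable {𝕜 E κ ι : Type*} [RCLike 𝕜] [NormedAddCommGroup E] [InnerProductSpace 𝕜 E] [Fintype κ]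

theorem re_inner_map_self_eq_sum (b : OrthonormalBasis κ 𝕜 E) {T : E →ₗ[𝕜] E} {μ : κ → ℝ}
    (hT : ∀ j, T (b j) = (μ j : 𝕜) • b j) (x : E) :
    RCLike.re (inner 𝕜 x (T x)) = ∑ j, μ j * ‖inner 𝕜 x (b j)‖ ^ 2 := by
  have hTx : T x = ∑ j, (inner 𝕜 (b j) x * μ j) • b j := by
    conv_lhs => rw [← b.sum_repr' x]
    simp only [map_sum, map_smul, hT, smul_smul]
  rw [hTx, inner_sum, map_sum]
  refine sum_congr rfl fun j _ => ?_
  rw [inner_smul_right, mul_right_comm, RCLike.re_mul_ofReal, inner_mul_symm_re_eq_norm, norm_mul,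
    norm_inner_symm (b j) x]
  ring

theorem exists_sum_re_inner_map_self_le_sum [Fintype ι] (b : OrthonormalBasis κ 𝕜 E)
    {T : E →ₗ[𝕜] E} {μ : κ → ℝ} (hT : ∀ j, T (b j) = (μ j : 𝕜) • b j) {v : ι → E}
    (hv : Orthonormal 𝕜 v) :
    ∃ S : Finset κ, #S = Fintype.card ι ∧
      ∑ i, RCLike.re (inner 𝕜 (v i) (T (v i))) ≤ ∑ j ∈ S, μ j := by
  have := b.toBasis.finiteDimensional_of_finite
  have hcard : Fintype.card ι ≤ Nat.card κ := by
    rw [Nat.card_eq_fintype_card, ← Module.finrank_eq_card_basis b.toBasis]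
    exact hv.linearIndependent.fintype_card_le_finrank
  obtain ⟨S, τ, hS, hle, hge⟩ := exists_card_eq_and_threshold μ hcard
  refine ⟨S, hS, ?_⟩
  have bessel (j : κ) : ∑ i, ‖inner 𝕜 (v i) (b j)‖ ^ 2 ≤ 1 := by
    simpa [b.orthonormal.1 j] using hv.sum_inner_products_le (x := b j) (s := univ)
  have parseval : ∑ j, ∑ i, ‖inner 𝕜 (v i) (b j)‖ ^ 2 = #S := by
    rw [sum_comm, hS]
    simp [b.sum_sq_norm_inner_left, hv.1]
  calc ∑ i, RCLike.re (inner 𝕜 (v i) (T (v i)))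
      = ∑ j, μ j * ∑ i, ‖inner 𝕜 (v i) (b j)‖ ^ 2 := by
        simp only [re_inner_map_self_eq_sum b hT, mul_sum]
        exact sum_comm
    _ ≤ ∑ j ∈ S, μ j :=
        sum_mul_le_sum_of_threshold hle hge (fun j => by positivity) bessel parseval

end KyFan

section Sk

variable {n : ℕ} {M : Matrix (Fin n) (Fin n) ℝ}

theorem sum_eigenvalues_le_Sk (hM : M.IsHermitian) (S : Finset (Fin n)) :
    ∑ i ∈ S, hM.eigenvalues i ≤ Sk M #S := by
  rw [Sk, dif_pos hM]
  refine le_csSup (Set.Finite.bddAbove ?_) ⟨S, rfl, rfl⟩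
  refine (Set.finite_range fun T : Finset (Fin n) => ∑ i ∈ T, hM.eigenvalues i).subset ?_
  rintro _ ⟨T, -, rfl⟩
  exact ⟨T, rfl⟩

theorem sum_dotProduct_mulVec_le_Sk (hM : M.IsHermitian) {ι : Type*} [Fintype ι]
    {v : ι → EuclideanSpace ℝ (Fin n)} (hv : Orthonormal ℝ v) :
    ∑ i, v i ⬝ᵥ M *ᵥ v i ≤ Sk M (Fintype.card ι) := by
  have hT (j : Fin n) : M.toEuclideanLin (hM.eigenvectorBasis j) =
      (hM.eigenvalues j : ℝ) • hM.eigenvectorBasis j := by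
    ext i
    simpa using congrFun (hM.mulVec_eigenvectorBasis j) i
  obtain ⟨S, hS, hle⟩ := exists_sum_re_inner_map_self_le_sum hM.eigenvectorBasis hT hv
  rw [← hS]
  refine le_trans (le_of_eq (sum_congr rfl fun i _ => ?_)) (hle.trans (sum_eigenvalues_le_Sk hM S))
  simp [EuclideanSpace.inner_eq_star_dotProduct, dotProduct_comm]

theorem apply_self_le_Sk_one (hM : M.IsHermitian) (i : Fin n) : M i i ≤ Sk M 1 := by
  have hv : Orthonormal ℝ fun _ : Unit => EuclideanSpace.single i (1 : ℝ) := by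
    simp
  simpa using sum_dotProduct_mulVec_le_Sk hM hv

end Sk

section Aalpha

variable {n : ℕ} (α : ℝ) (G : SimpleGraph (Fin n)) [DecidableRel G.Adj]

theorem isHermitian_Aalpha : (Aalpha α G).IsHermitian := by
  have hD : (diagonal fun i => (G.degree i : ℝ)).IsHermitian := isHermitian_diagonal _
  have hA : (G.adjMatrix ℝ).IsHermitian := by simp [IsHermitian]
  exact (hD.smul (.all α)).add (hA.smul (.all (1 - α)))

theorem Aalpha_apply_self (v : Fin n) : Aalpha α G v v = α * G.degree v := by
  simp [Aalpha]

variable {G} in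
theorem Aalpha_apply_of_adj {u v : Fin n} (h : G.Adj u v) : Aalpha α G u v = 1 - α := by
  simp [Aalpha, diagonal_apply_ne _ h.ne, h]

theorem dotProduct_Aalpha_mulVec_self (w : Fin n → ℝ) :
    w ⬝ᵥ Aalpha α G *ᵥ w =
      ∑ u, ∑ v ∈ G.neighborFinset u, (α * w u ^ 2 + (1 - α) * (w u * w v)) := by
  refine sum_congr rfl fun u _ => ?_
  simp only [Aalpha, add_mulVec, smul_mulVec, Pi.add_apply, Pi.smul_apply, mulVec_diagonal,
    SimpleGraph.adjMatrix_mulVec_apply, sum_add_distrib, ← mul_sum, sum_const,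
    SimpleGraph.card_neighborFinset_eq_degree, smul_eq_mul, nsmul_eq_mul]
  ring

theorem two_mul_dotProduct_Aalpha_mulVec_self (w : Fin n → ℝ) :
    2 * (w ⬝ᵥ Aalpha α G *ᵥ w) = ∑ u, ∑ v ∈ G.neighborFinset u,
      (α * (w u ^ 2 + w v ^ 2) + 2 * (1 - α) * (w u * w v)) := by
  have hswap : w ⬝ᵥ Aalpha α G *ᵥ w =
      ∑ u, ∑ v ∈ G.neighborFinset u, (α * w v ^ 2 + (1 - α) * (w v * w u)) := by
    rw [dotProduct_Aalpha_mulVec_self]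
    exact sum_comm' fun u v => by simp [G.adj_comm]
  rw [two_mul]
  nth_rw 1 [dotProduct_Aalpha_mulVec_self]
  rw [hswap, ← sum_add_distrib]
  refine sum_congr rfl fun u _ => ?_
  rw [← sum_add_distrib]
  exact sum_congr rfl fun v _ => by ring

end Aalpha

section TestVectors

variable {V : Type*} [DecidableEq V]

/-- The vector with value `p` on `X`, value `r` on `Y \ X` and `0` elsewhere; for a bipartition
`(X, Y)` and suitable `p` and `r` it is the first test vector. -/
def bipartiteVec (X Y : Finset V) (p r : ℝ) : V → ℝ :=
  fun v => if v ∈ X then p else if v ∈ Y then r else 0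

/-- The vector `a e_x - b e_y`, the test vector attached to an edge `xy` of a matching. -/
def edgeVec (x y : V) (a b : ℝ) : V → ℝ :=
  Pi.single x a - Pi.single y b

variable {X Y : Finset V} {p r a b : ℝ}

theorem bipartiteVec_of_mem_left {v : V} (hv : v ∈ X) : bipartiteVec X Y p r v = p :=
  if_pos hv

theorem bipartiteVec_of_mem_right (hXY : Disjoint X Y) {v : V} (hv : v ∈ Y) :
    bipartiteVec X Y p r v = r := by
  rw [bipartiteVec, if_neg (disjoint_right.1 hXY hv), if_pos hv]

variable [Fintype V]

theorem bipartiteVec_dotProduct_self (hXY : Disjoint X Y) :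
    bipartiteVec X Y p r ⬝ᵥ bipartiteVec X Y p r = #X * p ^ 2 + #Y * r ^ 2 := by
  have hsq (v : V) : bipartiteVec X Y p r v * bipartiteVec X Y p r v =
      (if v ∈ X then p ^ 2 else 0) + if v ∈ Y then r ^ 2 else 0 := by
    by_cases hX : v ∈ X
    · simp [bipartiteVec, hX, disjoint_left.1 hXY hX, sq]
    · by_cases hY : v ∈ Y <;> simp [bipartiteVec, hX, hY, sq]
  simp [dotProduct, hsq, sum_add_distrib]

theorem bipartiteVec_dotProduct_edgeVec (hXY : Disjoint X Y) {x y : V} (hx : x ∈ X) (hy : y ∈ Y) :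
    bipartiteVec X Y p r ⬝ᵥ edgeVec x y a b = p * a - r * b := by
  simp [edgeVec, dotProduct_sub, bipartiteVec_of_mem_left hx, bipartiteVec_of_mem_right hXY hy]

theorem edgeVec_dotProduct_mulVec (M : Matrix V V ℝ) (x y : V) :
    edgeVec x y a b ⬝ᵥ M *ᵥ edgeVec x y a b =
      a ^ 2 * M x x - a * b * (M x y + M y x) + b ^ 2 * M y y := by
  simp only [edgeVec, mulVec_sub, dotProduct_sub, sub_dotProduct, single_dotProduct,
    mulVec_single, Pi.smul_apply, col_apply, op_smul_eq_smul, smul_eq_mul]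
  ring

theorem orthonormal_edgeVec {ι : Type*} {f g : ι → V} (hfg : Function.Injective (Sum.elim f g))
    (hab : a ^ 2 + b ^ 2 = 1) :
    Orthonormal ℝ fun i => WithLp.toLp 2 (edgeVec (f i) (g i) a b) := by
  classical
  obtain ⟨hf, hg, hne⟩ := Sum.elim_injective.1 hfg
  rw [orthonormal_iff_ite]
  intro i j
  rw [EuclideanSpace.inner_toLp_toLp, star_trivial]
  rcases eq_or_ne i j with rfl | hij
  · simp [edgeVec, dotProduct_sub, hne, (hne _ _).symm, ← sq, hab]
  · simp [edgeVec, dotProduct_sub, hne, (hne _ _).symm, hf.ne hij, hg.ne hij, hij]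

theorem orthonormal_vecCons_bipartiteVec_edgeVec {l : ℕ} {f g : Fin l → V}
    (hXY : Disjoint X Y) (hf : Function.Injective f) (hg : Function.Injective g)
    (hfX : ∀ i, f i ∈ X) (hgY : ∀ i, g i ∈ Y) (hpr : #X * p ^ 2 + #Y * r ^ 2 = 1)
    (hab : a ^ 2 + b ^ 2 = 1) (hpa : p * a = r * b) :
    Orthonormal ℝ (vecCons (WithLp.toLp 2 (bipartiteVec X Y p r))
      fun i => WithLp.toLp 2 (edgeVec (f i) (g i) a b)) := by
  refine orthonormal_vecCons_iff.2 ⟨?_, fun i => ?_, orthonormal_edgeVec ?_ hab⟩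
  · rw [norm_eq_sqrt_real_inner, EuclideanSpace.inner_toLp_toLp, star_trivial,
      bipartiteVec_dotProduct_self hXY, hpr, Real.sqrt_one]
  · rw [EuclideanSpace.inner_toLp_toLp, star_trivial, dotProduct_comm,
      bipartiteVec_dotProduct_edgeVec hXY (hfX i) (hgY i), hpa, sub_self]
  · exact hf.sumElim hg fun i j => disjoint_iff_ne.1 hXY _ (hfX i) _ (hgY j)

end TestVectors

section RayleighQuotients

variable {n : ℕ} {G : SimpleGraph (Fin n)} [DecidableRel G.Adj] {α a b p r : ℝ}

theorem bipartiteVec_dotProduct_Aalpha_mulVec {X Y : Finset (Fin n)}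
    (hG : G.IsBipartiteWith X Y) :
    bipartiteVec X Y p r ⬝ᵥ Aalpha α G *ᵥ bipartiteVec X Y p r =
      #G.edgeFinset * (α * (p ^ 2 + r ^ 2) + 2 * (1 - α) * (p * r)) := by
  set w := bipartiteVec X Y p r with hw
  have hXY : Disjoint X Y := disjoint_coe.1 hG.disjoint
  have hedge (u v : Fin n) (huv : G.Adj u v) :
      α * (w u ^ 2 + w v ^ 2) + 2 * (1 - α) * (w u * w v) =
        α * (p ^ 2 + r ^ 2) + 2 * (1 - α) * (p * r) := by
    rcases hG.mem_of_adj huv with ⟨hu, hv⟩ | ⟨hu, hv⟩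
    · rw [hw, bipartiteVec_of_mem_left hu, bipartiteVec_of_mem_right hXY hv]
    · rw [hw, bipartiteVec_of_mem_left hv, bipartiteVec_of_mem_right hXY hu]
      ring
  refine mul_left_cancel₀ (two_ne_zero' ℝ) ?_
  calc 2 * (w ⬝ᵥ Aalpha α G *ᵥ w)
      = ∑ u, ∑ v ∈ G.neighborFinset u, (α * (p ^ 2 + r ^ 2) + 2 * (1 - α) * (p * r)) := by
        rw [two_mul_dotProduct_Aalpha_mulVec_self]
        exact sum_congr rfl fun u _ => sum_congr rfl fun v hv =>
          hedge u v ((G.mem_neighborFinset u v).1 hv)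
    _ = (∑ u, G.degree u : ℕ) * (α * (p ^ 2 + r ^ 2) + 2 * (1 - α) * (p * r)) := by
        simp only [sum_const, SimpleGraph.card_neighborFinset_eq_degree, nsmul_eq_mul,
          Nat.cast_sum, sum_mul]
    _ = 2 * (#G.edgeFinset * (α * (p ^ 2 + r ^ 2) + 2 * (1 - α) * (p * r))) := by
        rw [G.sum_degrees_eq_twice_card_edges]
        push_cast
        ring

theorem le_edgeVec_dotProduct_Aalpha_mulVec (hα : 0 ≤ α) (hab : a ^ 2 + b ^ 2 = 1) {x y : Fin n}
    (hxy : G.Adj x y) :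
    α - 2 * (1 - α) * (a * b) ≤ edgeVec x y a b ⬝ᵥ Aalpha α G *ᵥ edgeVec x y a b := by
  have hle {u v : Fin n} (huv : G.Adj u v) : α ≤ α * G.degree u := by
    refine le_mul_of_one_le_right hα ?_
    exact_mod_cast (G.degree_pos_iff_exists_adj u).2 ⟨v, huv⟩
  rw [edgeVec_dotProduct_mulVec, Aalpha_apply_self, Aalpha_apply_self, Aalpha_apply_of_adj α hxy,
    Aalpha_apply_of_adj α hxy.symm]
  calc α - 2 * (1 - α) * (a * b)
      = a ^ 2 * α - a * b * (1 - α + (1 - α)) + b ^ 2 * α := by linear_combination -α * hab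
    _ ≤ a ^ 2 * (α * G.degree x) - a * b * (1 - α + (1 - α)) + b ^ 2 * (α * G.degree y) := by
        gcongr
        exacts [hle hxy, hle hxy.symm]

theorem le_Sk_Aalpha_of_weights {X Y : Finset (Fin n)} (hG : G.IsBipartiteWith X Y) (hα : 0 ≤ α)
    {l : ℕ} {f g : Fin l → Fin n} (hf : Function.Injective f) (hg : Function.Injective g)
    (hfX : ∀ i, f i ∈ X) (hgY : ∀ i, g i ∈ Y) (hfg : ∀ i, G.Adj (f i) (g i))
    (hpr : #X * p ^ 2 + #Y * r ^ 2 = 1) (hab : a ^ 2 + b ^ 2 = 1) (hpa : p * a = r * b) :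
    #G.edgeFinset * (α * (p ^ 2 + r ^ 2) + 2 * (1 - α) * (p * r))
      + l * (α - 2 * (1 - α) * (a * b)) ≤ Sk (Aalpha α G) (l + 1) := by
  have hon := orthonormal_vecCons_bipartiteVec_edgeVec (disjoint_coe.1 hG.disjoint) hf hg hfX hgY
    hpr hab hpa
  have hkyFan := sum_dotProduct_mulVec_le_Sk (isHermitian_Aalpha α G) hon
  simp only [Fin.sum_univ_succ, cons_val_zero, cons_val_succ, Fintype.card_fin,
    bipartiteVec_dotProduct_Aalpha_mulVec hG] at hkyFan
  refine le_trans ?_ hkyFan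
  gcongr
  simpa using card_nsmul_le_sum univ _ _ fun i _ =>
    le_edgeVec_dotProduct_Aalpha_mulVec (G := G) hα hab (hfg i)

end RayleighQuotients

section Matching

theorem exists_isMatching_ncard_edgeSet_eq {n : ℕ} (G : SimpleGraph (Fin n)) :
    ∃ M : G.Subgraph, M.IsMatching ∧ M.edgeSet.ncard = matchingNumber G := by
  refine Nat.sSup_mem (s := {k | ∃ M : G.Subgraph, M.IsMatching ∧ M.edgeSet.ncard = k})
    ⟨0, ⊥, fun v hv => hv.elim, by simp⟩ ⟨Nat.card (Sym2 (Fin n)), ?_⟩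
  rintro _ ⟨M, -, rfl⟩
  rw [← Set.ncard_univ]
  exact Set.ncard_le_ncard (Set.subset_univ _)

theorem exists_injective_of_isMatching {V : Type*} {G : SimpleGraph V} {X Y : Set V}
    (hG : G.IsBipartiteWith X Y) {M : G.Subgraph} (hM : M.IsMatching) :
    ∃ f g : M.edgeSet → V, Function.Injective f ∧ Function.Injective g ∧ (∀ e, f e ∈ X) ∧
      (∀ e, g e ∈ Y) ∧ ∀ e, G.Adj (f e) (g e) := by
  have hends (e : M.edgeSet) : ∃ x y, x ∈ X ∧ y ∈ Y ∧ M.Adj x y ∧ e.1 = s(x, y) := by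
    obtain ⟨e, he⟩ := e
    induction e using Sym2.ind with | _ x y
    rw [SimpleGraph.Subgraph.mem_edgeSet] at he
    rcases hG.mem_of_adj he.adj_sub with ⟨hx, hy⟩ | ⟨hx, hy⟩
    · exact ⟨x, y, hx, hy, he, rfl⟩
    · exact ⟨y, x, hy, hx, he.symm, Sym2.eq_swap⟩
  choose f g hf hg hadj heq using hends
  refine ⟨f, g, fun e e' h => ?_, fun e e' h => ?_, hf, hg, fun e => (hadj e).adj_sub⟩
  · have hgg : g e = g e' := hM.eq_of_adj_left (hadj e) (h ▸ hadj e')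
    rw [Subtype.ext_iff, heq, heq, h, hgg]
  · have hff : f e = f e' := hM.eq_of_adj_right (hadj e) (h ▸ hadj e')
    rw [Subtype.ext_iff, heq, heq, h, hff]

theorem exists_injective_of_le_matchingNumber {n : ℕ} {G : SimpleGraph (Fin n)}
    {X Y : Finset (Fin n)} (hG : G.IsBipartiteWith X Y) {l : ℕ} (hl : l ≤ matchingNumber G) :
    ∃ f g : Fin l → Fin n, Function.Injective f ∧ Function.Injective g ∧ (∀ i, f i ∈ X) ∧
      (∀ i, g i ∈ Y) ∧ ∀ i, G.Adj (f i) (g i) := by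
  obtain ⟨M, hM, hcard⟩ := exists_isMatching_ncard_edgeSet_eq G
  obtain ⟨f, g, hf, hg, hfX, hgY, hadj⟩ := exists_injective_of_isMatching hG hM
  have hle : l ≤ Nat.card M.edgeSet := by rwa [Nat.card_coe_set_eq, hcard]
  let φ : Fin l → M.edgeSet := (Finite.equivFin M.edgeSet).symm ∘ Fin.castLE hle
  have hφ : Function.Injective φ := (Equiv.injective _).comp (Fin.castLE_injective hle)
  exact ⟨f ∘ φ, g ∘ φ, hf.comp hφ, hg.comp hφ, fun i => hfX _, fun i => hgY _, fun i => hadj _⟩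

theorem matchingNumber_bot (n : ℕ) : matchingNumber (⊥ : SimpleGraph (Fin n)) = 0 := by
  obtain ⟨M, -, hcard⟩ := exists_isMatching_ncard_edgeSet_eq (⊥ : SimpleGraph (Fin n))
  have hM : M.edgeSet = ∅ := by simpa using M.edgeSet_subset
  rw [← hcard, hM, Set.ncard_empty]

end Matching

theorem nonempty_of_isBipartiteWith {V : Type*} {G : SimpleGraph V} {X Y : Set V}
    (hG : G.IsBipartiteWith X Y) (hne : G ≠ ⊥) : X.Nonempty ∧ Y.Nonempty := by
  obtain ⟨u, v, huv⟩ := SimpleGraph.ne_bot_iff_exists_adj.1 hne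
  rcases hG.mem_of_adj huv with ⟨hu, hv⟩ | ⟨hu, hv⟩
  exacts [⟨⟨u, hu⟩, v, hv⟩, ⟨⟨v, hv⟩, u, hu⟩]

theorem exists_test_weights {s t : ℝ} (hs : 0 < s) (ht : 0 < t) :
    ∃ p r a b : ℝ, s * p ^ 2 + t * r ^ 2 = 1 ∧ a ^ 2 + b ^ 2 = 1 ∧ p * a = r * b ∧
      p ^ 2 + r ^ 2 = (1 / s + 1 / t) / 2 ∧ p * r = 1 / (2 * √(s * t)) ∧
      a * b = √(s * t) / (s + t) := by
  have hst : 0 < s + t := add_pos hs ht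
  refine ⟨1 / √(2 * s), 1 / √(2 * t), √(s / (s + t)), √(t / (s + t)), ?_, ?_, ?_, ?_, ?_, ?_⟩
  · rw [div_pow, div_pow, sq_sqrt (by positivity), sq_sqrt (by positivity)]
    field_simp
    norm_num
  · rw [sq_sqrt (by positivity), sq_sqrt (by positivity)]
    field_simp
  · simp only [sqrt_mul zero_le_two, sqrt_div hs.le, sqrt_div ht.le]
    field_simp
  · rw [div_pow, div_pow, sq_sqrt (by positivity), sq_sqrt (by positivity)]
    field_simp
  · rw [sqrt_mul zero_le_two, sqrt_mul zero_le_two, sqrt_mul hs.le]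
    field_simp
    norm_num
  · rw [sqrt_div hs.le, sqrt_div ht.le, div_mul_div_comm, ← sqrt_mul hs.le, mul_self_sqrt hst.le]

theorem Sk_Aalpha_bot_one_nonneg {n : ℕ} [Nonempty (Fin n)]
    [DecidableRel (⊥ : SimpleGraph (Fin n)).Adj] (α : ℝ) :
    0 ≤ Sk (Aalpha α (⊥ : SimpleGraph (Fin n))) 1 := by
  let v : Fin n := Classical.arbitrary _
  have hv := apply_self_le_Sk_one (isHermitian_Aalpha α (⊥ : SimpleGraph (Fin n))) v
  have hdeg : (⊥ : SimpleGraph (Fin n)).degree v = 0 := by simp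
  rwa [Aalpha_apply_self, hdeg, Nat.cast_zero, mul_zero] at hv

theorem stmt15_general {n : ℕ} [Nonempty (Fin n)] (G : SimpleGraph (Fin n)) [DecidableRel G.Adj]
    {X Y : Finset (Fin n)} (hG : G.IsBipartiteWith X Y) {α : ℝ} (hα : 0 ≤ α)
    {k : ℕ} (hk₁ : 1 ≤ k) (hk : k ≤ matchingNumber G + 1) :
    α * #G.edgeFinset / 2 * (1 / (#X : ℝ) + 1 / (#Y : ℝ))
        + (1 - α) * #G.edgeFinset / √((#X : ℝ) * #Y)
        + ((k : ℝ) - 1) * (α - 2 * (1 - α) * √((#X : ℝ) * #Y) / ((#X : ℝ) + #Y)) ≤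
      Sk (Aalpha α G) k := by
  obtain ⟨l, rfl⟩ := Nat.exists_eq_add_of_le' hk₁
  have hl : l ≤ matchingNumber G := Nat.le_of_succ_le_succ hk
  rcases eq_or_ne G ⊥ with rfl | hne
  · obtain rfl : l = 0 := by rwa [matchingNumber_bot, Nat.le_zero] at hl
    simpa [SimpleGraph.edgeFinset_eq_empty.2] using Sk_Aalpha_bot_one_nonneg α
  · obtain ⟨hX, hY⟩ := nonempty_of_isBipartiteWith hG hne
    have hs : (0 : ℝ) < #X := Nat.cast_pos.2 (coe_nonempty.1 hX).card_pos
    have ht : (0 : ℝ) < #Y := Nat.cast_pos.2 (coe_nonempty.1 hY).card_pos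
    obtain ⟨p, r, a, b, hpr, hab, hpa, hsq, hmul, habst⟩ := exists_test_weights hs ht
    obtain ⟨f, g, hf, hg, hfX, hgY, hfg⟩ := exists_injective_of_le_matchingNumber hG hl
    have hmain := le_Sk_Aalpha_of_weights hG hα hf hg hfX hgY hfg hpr hab hpa
    rw [hsq, hmul, habst] at hmain
    convert hmain using 1
    push_cast
    field_simp
    ring

theorem stmt15 {n : ℕ} (G : SimpleGraph (Fin n)) [DecidableRel G.Adj] (hG : G.Connected)
    (X Y : Finset (Fin n)) (hXY : Disjoint X Y) (hcover : X ∪ Y = Finset.univ)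
    (hbip : ∀ u v, G.Adj u v → (u ∈ X ∧ v ∈ Y) ∨ (u ∈ Y ∧ v ∈ X))
    (s t : ℕ) (hs : X.card = s) (ht : Y.card = t)
    (m : ℕ) (hm : G.edgeFinset.card = m)
    (β : ℕ) (hβ : β = matchingNumber G)
    (α : ℝ) (hα0 : 0 ≤ α) (hα1 : α ≤ 1)
    (k : ℕ) (hk1 : 1 ≤ k) (hkβ : k ≤ β + 1) :
    Sk (Aalpha α G) k ≥
      α * m / 2 * (1 / (s : ℝ) + 1 / (t : ℝ)) + (1 - α) * m / Real.sqrt ((s : ℝ) * t)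
        + ((k : ℝ) - 1) * (α - 2 * (1 - α) * Real.sqrt ((s : ℝ) * t) / ((s : ℝ) + t)) := by
  have := hG.nonempty
  subst hs ht hm hβ
  exact stmt15_general G ⟨disjoint_coe.2 hXY, by simpa using hbip⟩ hα0 hk1 hkβ
end
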